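/- Let F : H → H be Fréchet differentiable with derivative DF : H → L(H) continuous and bounded (sup_x ‖DF(x)‖ < ∞), let T > 0 and let g : [0,T] → H be continuous. For each x ∈ H let y(·,x) : [0,T] → H denote the unique continuous solution of y(t,x) = S(t)x + ∫₀ᵗ K(t−s) F(y(s,x)) ds + g(t). Then for every t ∈ [0,T] the map x ↦ y(t,x) is Fréchet differentiable, and for every h ∈ H its derivative in direction h equals η^h(t,x), where η^h(·,x) is the unique continuous solution of η(t) = S(t)h + ∫₀ᵗ K(t−s) ( DF(y(s,x)) · η(s) ) ds. -/

import Mathlib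

open Real MeasureTheory

noncomputable section

/-- `H = ℓ²(ℤ; ℝ)`, modelling `2π`-periodic `L²` functions via the trigonometric
orthonormal basis. -/
abbrev H : Type := lp (fun _ : ℤ => ℝ) 2

section Volterra

variable {E : Type*} [NormedAddCommGroup E] [NormedSpace ℝ E]

/-- the singular kernel hypotheses -/
structure SingKer (k : ℝ → E →L[ℝ] E) : Prop where
  cont : ContinuousOn k (Set.Ioi 0)
  bd : ∀ r : ℝ, 0 < r → ‖k r‖ ≤ r ^ (-(1/2) : ℝ)

lemma ker_weight_integrable (t β : ℝ) :
    IntervalIntegrable (fun s : ℝ => (t - s) ^ (-(1/2) : ℝ) * Real.exp (β * s)) volume 0 t := by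
  have h1 : IntervalIntegrable (fun s : ℝ => (t - s) ^ (-(1/2) : ℝ)) volume 0 t := by
    have := (intervalIntegral.intervalIntegrable_rpow' (a := 0) (b := t)
      (r := (-(1/2) : ℝ)) (by norm_num)).comp_sub_left t
    simp only [sub_zero, sub_self] at this
    exact this.symm
  exact h1.mul_continuousOn (by fun_prop)

lemma ker_aesm {k : ℝ → E →L[ℝ] E} (hk : SingKer k) {T t : ℝ} (ht : t ∈ Set.Icc 0 T)
    {f : ℝ → E} (hf : ContinuousOn f (Set.Icc 0 T)) :
    AEStronglyMeasurable (fun s => k (t - s) (f s)) (volume.restrict (Set.Ioc 0 t)) := by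
  have : AEStronglyMeasurable (fun s => k (t - s) (f s)) (volume.restrict (Set.Ioo 0 t)) := by
    apply ContinuousOn.aestronglyMeasurable _ measurableSet_Ioo
    apply ContinuousOn.clm_apply
    · apply hk.cont.comp (by fun_prop)
      intro s hs
      simpa using hs.2
    · exact hf.mono (fun s hs => ⟨hs.1.le, hs.2.le.trans ht.2⟩)
  rwa [restrict_Ioo_eq_restrict_Ioc] at this

lemma ker_ae_ne (t : ℝ) (μ : Measure ℝ) [NullSingletonClass μ] : ∀ᵐ s ∂μ, s ≠ t := by
  simp [ae_iff]

lemma ker_bound {k : ℝ → E →L[ℝ] E} (hk : SingKer k) {t β N : ℝ}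
    {f : ℝ → E} (hfN : ∀ s ∈ Set.Icc 0 t, ‖f s‖ ≤ N * Real.exp (β * s)) :
    ∀ᵐ s ∂volume, s ∈ Set.Ioc 0 t →
      ‖k (t - s) (f s)‖ ≤ N * ((t - s) ^ (-(1/2) : ℝ) * Real.exp (β * s)) := by
  filter_upwards [ker_ae_ne t volume] with s hs hs'
  have hpos : 0 < t - s := sub_pos.2 (lt_of_le_of_ne hs'.2 hs)
  calc _ ≤ ‖k (t - s)‖ * ‖f s‖ := ContinuousLinearMap.le_opNorm _ _
    _ ≤ (t - s) ^ (-(1/2) : ℝ) * (N * Real.exp (β * s)) := by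
        gcongr
        · exact hk.bd _ hpos
        · exact hfN s ⟨hs'.1.le, hs'.2⟩
    _ = _ := by ring

lemma ker_integrable {k : ℝ → E →L[ℝ] E} (hk : SingKer k) {T t : ℝ} (ht : t ∈ Set.Icc 0 T)
    {f : ℝ → E} (hf : ContinuousOn f (Set.Icc 0 T)) :
    IntervalIntegrable (fun s => k (t - s) (f s)) volume 0 t := by
  obtain ⟨N, hN⟩ := isCompact_Icc.exists_bound_of_continuousOn hf
  have hb := ker_bound hk (t := t) (β := 0) (N := N) (f := f)
    (fun s hs => by simpa using hN s ⟨hs.1, hs.2.trans ht.2⟩)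
  refine ((ker_weight_integrable t 0).const_mul N).mono_fun' ?_ ?_
  · rw [Set.uIoc_of_le ht.1]; exact ker_aesm hk ht hf
  · rw [Set.uIoc_of_le ht.1]
    exact (ae_restrict_iff' measurableSet_Ioc).2 hb

/-- Weighted estimate. -/
lemma ker_weight {q : ℝ} (hq : 0 < q) : ∃ β : ℝ, 0 < β ∧ ∀ k : ℝ → E →L[ℝ] E, SingKer k →
    ∀ t : ℝ, 0 ≤ t → ∀ (f : ℝ → E) (N : ℝ), 0 ≤ N →
      (∀ s ∈ Set.Icc 0 t, ‖f s‖ ≤ N * Real.exp (β * s)) →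
      ‖∫ s in (0:ℝ)..t, k (t - s) (f s)‖ ≤ q * N * Real.exp (β * t) := by
  have hG : 0 < Real.Gamma (1/2) := Real.Gamma_pos_of_pos (by norm_num)
  set G := Real.Gamma (1/2) with hGdef
  refine ⟨(G / q)^2, by positivity, ?_⟩
  set β := (G / q)^2 with hβ
  have hβ0 : 0 < β := by positivity
  have hint : ∫ r in Set.Ioi (0:ℝ), r ^ (-(1/2) : ℝ) * Real.exp (-(β * r)) = q := by
    have := Real.integral_rpow_mul_exp_neg_mul_Ioi (a := 1/2) (r := β) (by norm_num) hβ0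
    rw [show (1/2 - 1 : ℝ) = -(1/2) by norm_num] at this
    rw [this, hβ, ← Real.sqrt_eq_rpow, one_div, Real.sqrt_inv, Real.sqrt_sq (by positivity),
      ← hGdef]
    field_simp
  intro k hk t ht f N hN hf
  calc _ ≤ ∫ s in (0:ℝ)..t, N * ((t - s) ^ (-(1/2) : ℝ) * Real.exp (β * s)) :=
        intervalIntegral.norm_integral_le_of_norm_le ht (ker_bound hk hf)
          ((ker_weight_integrable t β).const_mul N)
    _ = N * ∫ s in (0:ℝ)..t, ((t - s) ^ (-(1/2) : ℝ) * Real.exp (β * s)) := by simp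
    _ = N * ∫ r in (0:ℝ)..t, (r ^ (-(1/2) : ℝ) * Real.exp (-(β * r))) * Real.exp (β * t) := by
        congr 1
        have := intervalIntegral.integral_comp_sub_left (a := 0) (b := t)
          (fun r : ℝ => (r ^ (-(1/2) : ℝ) * Real.exp (-(β * r))) * Real.exp (β * t)) t
        rw [sub_zero, sub_self] at this
        rw [← this]
        congr 1
        ext s
        rw [mul_assoc, ← Real.exp_add]
        ring_nf
    _ = (∫ r in Set.Ioc 0 t, r ^ (-(1/2) : ℝ) * Real.exp (-(β * r))) * N * Real.exp (β * t) := by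
        rw [intervalIntegral.integral_mul_const, intervalIntegral.integral_of_le ht]; ring
    _ ≤ q * N * Real.exp (β * t) := by
        gcongr
        rw [← hint]
        apply setIntegral_mono_set
        · have := integrableOn_rpow_mul_exp_neg_mul_rpow (p := 1) (s := -(1/2)) (b := β)
            (by norm_num) (by norm_num) hβ0
          simpa using this
        · filter_upwards [ae_restrict_mem measurableSet_Ioi] with r hr
          have : (0:ℝ) < r := hr
          simp only [Pi.zero_apply]
          positivity
        · exact Filter.Eventually.of_forall (fun s hs => hs.1)

lemma ker_continuousOn {k : ℝ → E →L[ℝ] E} (hk : SingKer k) {T : ℝ} (hT : 0 ≤ T)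
    {f : ℝ → E} (hf : ContinuousOn f (Set.Icc 0 T)) :
    ContinuousOn (fun t => ∫ s in (0:ℝ)..t, k (t - s) (f s)) (Set.Icc 0 T) := by
  obtain ⟨N, hN⟩ := isCompact_Icc.exists_bound_of_continuousOn hf
  have hN0 : 0 ≤ N := (norm_nonneg _).trans (hN 0 ⟨le_rfl, hT⟩)
  set h : ℝ → E := Set.IccExtend hT ((Set.Icc 0 T).domRestrict f) with hh
  have hhc : Continuous h := hf.domRestrict.Icc_extend'
  have hhN : ∀ s, ‖h s‖ ≤ N := fun s => by
    exact hN _ (Set.projIcc 0 T hT s).2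
  have hhf : ∀ s ∈ Set.Icc 0 T, h s = f s := fun s hs => Set.IccExtend_of_mem hT _ hs
  have heq : ∀ t ∈ Set.Icc 0 T, ∫ s in (0:ℝ)..t, k (t - s) (f s) =
      ∫ r in Set.Ioc 0 T, (Set.Ioc 0 t).indicator (fun r => k r (h (t - r))) r := by
    intro t ht
    rw [setIntegral_indicator measurableSet_Ioc,
      Set.inter_eq_self_of_subset_right (Set.Ioc_subset_Ioc_right ht.2),
      ← intervalIntegral.integral_of_le ht.1]
    have := intervalIntegral.integral_comp_sub_left (a := 0) (b := t)
          (fun r : ℝ => k r (h (t - r))) t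
    rw [sub_zero, sub_self] at this
    rw [← this]
    apply intervalIntegral.integral_congr
    intro s hs
    rw [Set.uIcc_of_le ht.1] at hs
    simp [hhf s ⟨hs.1, hs.2.trans ht.2⟩]
  refine ContinuousOn.congr ?_ heq
  intro t₀ ht₀
  apply continuousWithinAt_of_dominated (bound := fun r => r ^ (-(1/2) : ℝ) * N)
  · refine Filter.Eventually.of_forall fun t => ?_
    apply AEStronglyMeasurable.indicator _ measurableSet_Ioc
    apply ContinuousOn.aestronglyMeasurable _ measurableSet_Ioc
    exact (hk.cont.mono fun r hr => hr.1).clm_apply (by fun_prop)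
  · refine Filter.Eventually.of_forall fun t => ?_
    filter_upwards [ae_restrict_mem measurableSet_Ioc] with r hr
    have hr0 : 0 < r := hr.1
    by_cases hrt : r ∈ Set.Ioc 0 t
    · rw [Set.indicator_of_mem hrt]
      refine (ContinuousLinearMap.le_opNorm _ _).trans ?_
      gcongr
      · exact hk.bd r hr0
      · exact hhN _
    · rw [Set.indicator_of_notMem hrt, norm_zero]
      positivity
  · have := (intervalIntegral.intervalIntegrable_rpow' (a := 0) (b := T)
      (r := (-(1/2) : ℝ)) (by norm_num)).mul_const N
    rwa [intervalIntegrable_iff_integrableOn_Ioc_of_le hT] at this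
  · filter_upwards [ae_restrict_mem measurableSet_Ioc, ker_ae_ne t₀ (volume.restrict _)]
      with r hr hne
    apply ContinuousAt.continuousWithinAt
    rcases lt_or_gt_of_ne hne with hlt | hgt
    · have : ContinuousAt (fun t => k r (h (t - r))) t₀ := by fun_prop
      refine this.congr ?_
      filter_upwards [lt_mem_nhds hlt] with t ht
      rw [Set.indicator_of_mem (show r ∈ Set.Ioc 0 t from ⟨hr.1, ht.le⟩)]
    · refine (continuousAt_const (y := (0:E))).congr ?_
      filter_upwards [gt_mem_nhds hgt] with t ht
      rw [Set.indicator_of_notMem (fun h => absurd h.2 (not_le.2 ht))]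

/-- Singular Gronwall. -/
lemma ker_gronwall {C T : ℝ} (hC : 0 ≤ C) (hT : 0 ≤ T) : ∃ D : ℝ, 0 ≤ D ∧
    ∀ k : ℝ → E →L[ℝ] E, SingKer k → ∀ (u a f : ℝ → E) (A B : ℝ), 0 ≤ A → 0 ≤ B →
      ContinuousOn u (Set.Icc 0 T) →
      (∀ t ∈ Set.Icc 0 T, u t = a t + ∫ s in (0:ℝ)..t, k (t - s) (f s)) →
      (∀ t ∈ Set.Icc 0 T, ‖a t‖ ≤ A) →
      (∀ t ∈ Set.Icc 0 T, ‖f t‖ ≤ C * ‖u t‖ + B) →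
      ∀ t ∈ Set.Icc 0 T, ‖u t‖ ≤ D * (A + B) := by
  obtain ⟨β, hβ, hw⟩ := ker_weight (E := E) (q := 1 / (2 * (C + 1))) (by positivity)
  refine ⟨2 * Real.exp (β * T), by positivity, ?_⟩
  intro k hk u a f A B hA hB hu hueq ha hf t ht
  obtain ⟨t₀, ht₀, hmax⟩ := isCompact_Icc.exists_isMaxOn (Set.nonempty_Icc.2 hT)
    (f := fun t => Real.exp (-(β * t)) * ‖u t‖) (ContinuousOn.mul (by fun_prop) hu.norm)
  set m := Real.exp (-(β * t₀)) * ‖u t₀‖ with hm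
  have hm0 : 0 ≤ m := by positivity
  have hum : ∀ s ∈ Set.Icc 0 T, ‖u s‖ ≤ m * Real.exp (β * s) := by
    intro s hs
    have : Real.exp (-(β * s)) * ‖u s‖ ≤ m := hmax hs
    rw [Real.exp_neg, inv_mul_le_iff₀ (Real.exp_pos _)] at this
    linarith
  have h1 := hw k hk t₀ ht₀.1 f (C * m + B) (by positivity) (fun s hs => by
    have hs' : s ∈ Set.Icc 0 T := ⟨hs.1, hs.2.trans ht₀.2⟩
    have h2 := hf s hs'
    have h3 := mul_le_mul_of_nonneg_left (hum s hs') hC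
    have h4 : 1 ≤ Real.exp (β * s) := Real.one_le_exp (mul_nonneg hβ.le hs.1)
    have h5 := mul_le_mul_of_nonneg_left h4 hB
    nlinarith)
  have h2 : ‖u t₀‖ ≤ A * Real.exp (β * t₀) +
      1 / (2 * (C + 1)) * (C * m + B) * Real.exp (β * t₀) := by
    rw [hueq t₀ ht₀]
    refine (norm_add_le _ _).trans (add_le_add ?_ h1)
    have h4 : 1 ≤ Real.exp (β * t₀) := Real.one_le_exp (mul_nonneg hβ.le ht₀.1)
    exact (ha t₀ ht₀).trans (le_mul_of_one_le_right hA h4)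
  have h3 : m ≤ A + 1 / (2 * (C + 1)) * (C * m + B) := by
    refine hm.le.trans ?_
    rw [Real.exp_neg, inv_mul_le_iff₀ (Real.exp_pos _)]
    linarith
  have h4 : 1 / (2 * (C + 1)) * (C * m + B) ≤ m / 2 + B := by
    rw [one_div, inv_mul_le_iff₀ (by positivity)]
    nlinarith [mul_nonneg hC hB]
  have h5 : m ≤ 2 * (A + B) := by linarith
  calc ‖u t‖ ≤ m * Real.exp (β * t) := hum t ht
    _ ≤ (2 * (A + B)) * Real.exp (β * T) := by
      gcongr
      exact ht.2
    _ = _ := by ring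

/-- Linear Volterra equation: solution operator. -/
lemma ker_linear [CompleteSpace E] {k : ℝ → E →L[ℝ] E} (hk : SingKer k) {T : ℝ} (hT : 0 ≤ T)
    {S : ℝ → E →L[ℝ] E} (hS : ∀ h, ContinuousOn (fun t => S t h) (Set.Icc 0 T))
    (hSb : ∀ t ∈ Set.Icc 0 T, ∀ h, ‖S t h‖ ≤ ‖h‖)
    {M : ℝ → E →L[ℝ] E} (hM : ContinuousOn M (Set.Icc 0 T)) :
    ∃ R : ℝ → E →L[ℝ] E, ∀ h, ContinuousOn (fun t => R t h) (Set.Icc 0 T) ∧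
      ∀ t ∈ Set.Icc 0 T, R t h = S t h + ∫ s in (0:ℝ)..t, k (t - s) (M s (R s h)) := by
  obtain ⟨C, hC⟩ := isCompact_Icc.exists_bound_of_continuousOn hM
  have hC0 : 0 ≤ C := (norm_nonneg _).trans (hC 0 ⟨le_rfl, hT⟩)
  obtain ⟨β, hβ, hw⟩ := ker_weight (E := E) (q := 1 / (2 * (C + 1))) (by positivity)
  let p : ℝ → Set.Icc (0:ℝ) T := Set.projIcc 0 T hT
  have hp : Continuous p := continuous_projIcc
  have hpc : ∀ s (hs : s ∈ Set.Icc 0 T), p s = ⟨s, hs⟩ := fun s hs => Set.projIcc_of_mem hT hs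
  let I : C(Set.Icc (0:ℝ) T, E) → ℝ → E := fun f s => M s (Real.exp (β * s) • f (p s))
  have hI : ∀ f, ContinuousOn (I f) (Set.Icc 0 T) := fun f =>
    hM.clm_apply (by fun_prop)
  have hIb : ∀ f, ∀ s ∈ Set.Icc 0 T, ‖I f s‖ ≤ (C * ‖f‖) * Real.exp (β * s) := by
    intro f s hs
    calc _ ≤ ‖M s‖ * ‖Real.exp (β * s) • f (p s)‖ := ContinuousLinearMap.le_opNorm _ _
      _ ≤ C * (Real.exp (β * s) * ‖f‖) := by
        rw [norm_smul, Real.norm_of_nonneg (Real.exp_pos _).le]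
        gcongr
        · exact hC s hs
        · exact f.norm_coe_le_norm _
      _ = _ := by ring
  let G0 : C(Set.Icc (0:ℝ) T, E) →ₗ[ℝ] C(Set.Icc (0:ℝ) T, E) :=
    { toFun := fun f => ⟨fun t => Real.exp (-(β * t)) • ∫ s in (0:ℝ)..t, k (t - s) (I f s), by
        have := continuousOn_iff_continuous_domRestrict.1 (ker_continuousOn hk hT (hI f))
        exact Continuous.smul (by fun_prop) this⟩
      map_add' := fun f f' => by
        ext t
        simp only [ContinuousMap.coe_mk, ContinuousMap.add_apply]
        rw [← smul_add, ← intervalIntegral.integral_add (ker_integrable hk t.2 (hI f))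
          (ker_integrable hk t.2 (hI f'))]
        simp [I, smul_add]
      map_smul' := fun c f => by
        ext t
        simp only [ContinuousMap.coe_mk, ContinuousMap.smul_apply, RingHom.id_apply]
        rw [smul_comm c, ← intervalIntegral.integral_smul c]
        congr 1
        apply intervalIntegral.integral_congr
        intro s _
        simp only [I, ContinuousMap.smul_apply, map_smul]
        rw [smul_comm] }
  let G : C(Set.Icc (0:ℝ) T, E) →L[ℝ] C(Set.Icc (0:ℝ) T, E) := G0.mkContinuous (1/2) (by
    intro f
    rw [ContinuousMap.norm_le _ (by positivity)]
    intro t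
    have h1 := hw k hk t t.2.1 (I f) (C * ‖f‖) (by positivity)
      (fun s hs => hIb f s ⟨hs.1, hs.2.trans t.2.2⟩)
    change ‖Real.exp (-(β * t)) • ∫ s in (0:ℝ)..t, k (t - s) (I f s)‖ ≤ _
    rw [norm_smul, Real.norm_of_nonneg (Real.exp_pos _).le, Real.exp_neg,
      inv_mul_le_iff₀ (Real.exp_pos _)]
    refine h1.trans ?_
    have h2 : 1 / (2 * (C + 1)) * C ≤ 1/2 := by
      rw [one_div, inv_mul_le_iff₀ (by positivity)]; linarith
    have h3 := mul_le_mul_of_nonneg_right h2 (mul_nonneg (norm_nonneg f) (Real.exp_pos (β * t)).le)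
    nlinarith)
  have hG : ‖G‖ < 1 := lt_of_le_of_lt (G0.mkContinuous_norm_le (by norm_num) _) (by norm_num)
  let P0 : E →ₗ[ℝ] C(Set.Icc (0:ℝ) T, E) :=
    { toFun := fun h => ⟨fun t => Real.exp (-(β * t)) • S t h, by
        have := continuousOn_iff_continuous_domRestrict.1 (hS h)
        exact Continuous.smul (by fun_prop) this⟩
      map_add' := fun f f' => by ext t; simp
      map_smul' := fun c f => by ext t; simp [smul_comm c] }
  let P : E →L[ℝ] C(Set.Icc (0:ℝ) T, E) := P0.mkContinuous 1 (by
    intro h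
    rw [ContinuousMap.norm_le _ (by positivity)]
    intro t
    change ‖Real.exp (-(β * t)) • S t h‖ ≤ _
    rw [norm_smul, Real.norm_of_nonneg (Real.exp_pos _).le]
    have h1 : Real.exp (-(β * t)) ≤ 1 := Real.exp_le_one_iff.2 (by
      have := mul_nonneg hβ.le t.2.1; linarith)
    exact mul_le_mul h1 (hSb t t.2 h) (norm_nonneg _) zero_le_one)
  let U := Units.oneSub G hG
  let Q : E →L[ℝ] C(Set.Icc (0:ℝ) T, E) := (↑U⁻¹ : C(Set.Icc (0:ℝ) T, E) →L[ℝ] C(Set.Icc (0:ℝ) T, E)).comp P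
  have hQ : ∀ h, Q h = P h + G (Q h) := by
    intro h
    have h1 : ((U : C(Set.Icc (0:ℝ) T, E) →L[ℝ] C(Set.Icc (0:ℝ) T, E)) * ↑U⁻¹) (P h) = P h := by
      rw [Units.mul_inv]; rfl
    have h2 : ((U : C(Set.Icc (0:ℝ) T, E) →L[ℝ] C(Set.Icc (0:ℝ) T, E)) * ↑U⁻¹) (P h) = Q h - G (Q h) := by
      rfl
    rw [← h1, h2]; abel
  refine ⟨fun t => Real.exp (β * t) • (ContinuousMap.evalCLM ℝ (p t)).comp Q, fun h => ⟨?_, ?_⟩⟩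
  · have : Continuous (fun t => Real.exp (β * t) • (Q h) (p t)) := by fun_prop
    exact this.continuousOn
  · intro t ht
    have h1 : (Q h) (p t) = Real.exp (-(β * t)) • S t h +
        Real.exp (-(β * t)) • ∫ s in (0:ℝ)..t, k (t - s) (I (Q h) s) := by
      conv_lhs => rw [hQ h]
      rw [hpc t ht]
      rfl
    change Real.exp (β * t) • (Q h) (p t) = S t h +
      ∫ s in (0:ℝ)..t, k (t - s) (M s (Real.exp (β * s) • (Q h) (p s)))
    rw [h1, smul_add, smul_smul, smul_smul, ← Real.exp_add]
    simp [I]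

end Volterra

lemma H_bound (σ : ℤ ≃ ℤ) {c : ℝ} (hc : 0 ≤ c) (a b : H)
    (h : ∀ k, |a k| ≤ c * |b (σ k)|) : ‖a‖ ≤ c * ‖b‖ := by
  have h2 : (0:ℝ) < (2 : ENNReal).toReal := by norm_num
  apply lp.norm_le_of_tsum_le h2 (by positivity)
  have hb := lp.hasSum_norm h2 b
  have ha := lp.hasSum_norm h2 a
  have hb' := ((Equiv.hasSum_iff σ).2 hb).mul_left (c ^ (2 : ENNReal).toReal)
  rw [Real.mul_rpow hc (norm_nonneg _), ha.tsum_eq]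
  refine hasSum_le (fun k => ?_) ha hb'
  simp only [Function.comp]
  rw [← Real.mul_rpow hc (norm_nonneg _)]
  exact Real.rpow_le_rpow (norm_nonneg _) (h k) h2.le

lemma S_bound {S : ℝ → H →L[ℝ] H}
    (hS : ∀ t : ℝ, 0 ≤ t → ∀ (x : H) (k : ℤ),
      (S t x) k = Real.exp (-(1 + (k : ℝ) ^ 2) * t) * x k) {t : ℝ} (ht : 0 ≤ t) (x : H) :
    ‖S t x‖ ≤ ‖x‖ := by
  rw [← one_mul ‖x‖]
  refine H_bound (Equiv.refl ℤ) zero_le_one _ _ fun k => ?_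
  rw [hS t ht, abs_mul, abs_of_pos (Real.exp_pos _)]
  simp only [Equiv.refl_apply]
  gcongr
  rw [Real.exp_le_one_iff]
  nlinarith [mul_nonneg (add_nonneg zero_le_one (sq_nonneg (k : ℝ))) ht]

lemma exp_diff_bound {a r₀ r r' : ℝ} (ha : 0 < a) (h0 : 0 < r₀) (h : r₀ ≤ r) (h' : r₀ ≤ r') :
    |Real.exp (-a * r) - Real.exp (-a * r')| ≤ a * Real.exp (-a * r₀) * |r - r'| := by
  have := (convex_Ici r₀).norm_image_sub_le_of_norm_hasDerivWithin_le
    (f := fun r => Real.exp (-a * r)) (f' := fun r => Real.exp (-a * r) * (-a))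
    (C := a * Real.exp (-a * r₀)) (x := r') (y := r) (fun s _ => by
      have h1 : HasDerivAt (fun r : ℝ => -a * r) (-a) s := by
        simpa using (hasDerivAt_id s).const_mul (-a)
      exact h1.exp.hasDerivWithinAt) (fun s hs => by
      have hs' : r₀ ≤ s := hs
      rw [norm_mul, norm_neg, Real.norm_of_nonneg ha.le, Real.norm_of_nonneg (Real.exp_pos _).le,
        mul_comm]
      gcongr ?_ * ?_
      apply Real.exp_le_exp.2
      nlinarith) h' h
  simpa using this

lemma K_ker {K : ℝ → H →L[ℝ] H}
    (hK : ∀ t : ℝ, 0 < t → ∀ (x : H) (k : ℤ),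
      (K t x) k = -(k : ℝ) * Real.exp (-(1 + (k : ℝ) ^ 2) * t) * x (-k)) : SingKer K := by
  constructor
  · intro r₁ hr₁
    have hr₁ : 0 < r₁ := hr₁
    set r₀ := r₁ / 2 with hr₀
    have h0 : 0 < r₀ := by positivity
    have key : ∀ r, r₀ ≤ r → ‖K r - K r₁‖ ≤ 2 / r₀ ^ 2 * |r - r₁| := by
      intro r hr
      refine ContinuousLinearMap.opNorm_le_bound _ (by positivity) fun x => ?_
      refine H_bound (Equiv.neg ℤ) (by positivity) _ _ fun k => ?_
      have h1 : (K r - K r₁) x k = -(k : ℝ) * (Real.exp (-(1 + (k : ℝ) ^ 2) * r)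
          - Real.exp (-(1 + (k : ℝ) ^ 2) * r₁)) * x (-k) := by
        have : (K r - K r₁) x k = K r x k - K r₁ x k := rfl
        rw [this, hK r (h0.trans_le hr), hK r₁ hr₁]; ring
      rw [h1, abs_mul, abs_mul, abs_neg]
      simp only [Equiv.neg_apply]
      refine mul_le_mul_of_nonneg_right ?_ (abs_nonneg _)
      set a := 1 + (k : ℝ) ^ 2 with ha
      have ha1 : 0 < a := by positivity
      have hka : |(k : ℝ)| ≤ a := by
        rw [ha, ← sq_abs]; nlinarith [sq_nonneg (|(k : ℝ)| - 1)]
      have h2 := exp_diff_bound ha1 h0 hr (show r₀ ≤ r₁ by linarith)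
      have h3 : a * (a * Real.exp (-a * r₀)) ≤ 2 / r₀ ^ 2 := by
        rw [neg_mul, Real.exp_neg, le_div_iff₀ (by positivity)]
        have h4 : (a * r₀) ^ 2 / 2 ≤ Real.exp (a * r₀) := by
          have := Real.quadratic_le_exp_of_nonneg (x := a * r₀) (by positivity)
          have h5 : 0 < a * r₀ := by positivity
          linarith
        have h6 : a * (a * (Real.exp (a * r₀))⁻¹) * r₀ ^ 2
            = (a * r₀) ^ 2 / Real.exp (a * r₀) := by field_simp
        rw [h6, div_le_iff₀ (Real.exp_pos _)]
        linarith
      calc _ ≤ a * (a * Real.exp (-a * r₀) * |r - r₁|) := by gcongr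
        _ = a * (a * Real.exp (-a * r₀)) * |r - r₁| := by ring
        _ ≤ _ := by gcongr
    apply ContinuousAt.continuousWithinAt
    rw [ContinuousAt, tendsto_iff_norm_sub_tendsto_zero]
    have hlim : Filter.Tendsto (fun r => 2 / r₀ ^ 2 * |r - r₁|) (nhds r₁) (nhds 0) := by
      have : Continuous (fun r => 2 / r₀ ^ 2 * |r - r₁|) := by fun_prop
      simpa using this.tendsto r₁
    refine squeeze_zero' (Filter.Eventually.of_forall fun r => norm_nonneg _) ?_ hlim
    filter_upwards [lt_mem_nhds (show r₀ < r₁ by linarith)] with r hr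
    exact key r hr.le
  · intro r hr
    refine ContinuousLinearMap.opNorm_le_bound _ (by positivity) fun x => ?_
    refine H_bound (Equiv.neg ℤ) (by positivity) _ _ fun k => ?_
    rw [hK r hr, abs_mul, abs_mul, abs_neg, abs_of_pos (Real.exp_pos _)]
    simp only [Equiv.neg_apply]
    gcongr
    rw [Real.rpow_neg hr.le, ← Real.sqrt_eq_rpow, neg_mul, Real.exp_neg]
    have hs : 0 < √r := Real.sqrt_pos.2 hr
    rw [← div_eq_mul_inv, div_le_iff₀ (Real.exp_pos _), ← div_eq_inv_mul, le_div_iff₀ hs]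
    have h1 := Real.add_one_le_exp ((1 + (k : ℝ) ^ 2) * r)
    have h2 : (√r) ^ 2 = r := Real.sq_sqrt hr.le
    have h3 : (|(k : ℝ)| * √r) ^ 2 = (k : ℝ) ^ 2 * r := by rw [mul_pow, sq_abs, h2]
    nlinarith [sq_nonneg (|(k : ℝ)| * √r - 1)]

/-- Differentiability of the (pathwise) mild solution with respect to the initial datum:
with `S(t)`, `K(t)` as in the text, `F` Fréchet differentiable with continuous bounded
derivative `DF`, and `y(·,x)` the unique continuous solution of
`y(t,x) = S(t)x + ∫₀ᵗ K(t−s)F(y(s,x))ds + g(t)`, for every `t ∈ [0,T]` the map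
`x ↦ y(t,x)` is Fréchet differentiable and its derivative in direction `h` is `η^h(t,x)`,
the unique continuous solution of `η(t) = S(t)h + ∫₀ᵗ K(t−s)(DF(y(s,x))·η(s))ds`. -/
theorem stmt_9 (S K : ℝ → H →L[ℝ] H)
    (hS : ∀ t : ℝ, 0 ≤ t → ∀ (x : H) (k : ℤ),
      (S t x) k = Real.exp (-(1 + (k : ℝ) ^ 2) * t) * x k)
    (hK : ∀ t : ℝ, 0 < t → ∀ (x : H) (k : ℤ),
      (K t x) k = -(k : ℝ) * Real.exp (-(1 + (k : ℝ) ^ 2) * t) * x (-k))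
    (F : H → H) (DF : H → H →L[ℝ] H)
    (hDF : ∀ x : H, HasFDerivAt F (DF x) x)
    (hDF_cont : Continuous DF)
    (hDF_bdd : ∃ C : ℝ, ∀ x : H, ‖DF x‖ ≤ C)
    (T : ℝ) (hT : 0 < T)
    (g : ℝ → H) (hg : ContinuousOn g (Set.Icc 0 T))
    (y : H → ℝ → H)
    (hy_cont : ∀ x : H, ContinuousOn (y x) (Set.Icc 0 T))
    (hy_sol : ∀ x : H, ∀ t ∈ Set.Icc (0 : ℝ) T,
      y x t = S t x + (∫ s in (0 : ℝ)..t, K (t - s) (F (y x s))) + g t)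
    (hy_unique : ∀ x : H, ∀ z : ℝ → H,
      ContinuousOn z (Set.Icc 0 T) →
      (∀ t ∈ Set.Icc (0 : ℝ) T,
        z t = S t x + (∫ s in (0 : ℝ)..t, K (t - s) (F (z s))) + g t) →
      ∀ t ∈ Set.Icc (0 : ℝ) T, z t = y x t) :
    ∀ t ∈ Set.Icc (0 : ℝ) T, ∀ x : H,
      ∃ L : H →L[ℝ] H, HasFDerivAt (fun z => y z t) L x ∧
        ∀ h : H, ∃ η : ℝ → H,
          ContinuousOn η (Set.Icc 0 T) ∧
          (∀ τ ∈ Set.Icc (0 : ℝ) T,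
            η τ = S τ h + ∫ s in (0 : ℝ)..τ, K (τ - s) (DF (y x s) (η s))) ∧
          (∀ η' : ℝ → H, ContinuousOn η' (Set.Icc 0 T) →
            (∀ τ ∈ Set.Icc (0 : ℝ) T,
              η' τ = S τ h + ∫ s in (0 : ℝ)..τ, K (τ - s) (DF (y x s) (η' s))) →
            ∀ τ ∈ Set.Icc (0 : ℝ) T, η' τ = η τ) ∧
          L h = η t := by
  have hk : SingKer K := K_ker hK
  have hSb : ∀ t ∈ Set.Icc 0 T, ∀ h, ‖S t h‖ ≤ ‖h‖ := fun t ht h => S_bound hS ht.1 h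
  have hF : Continuous F := continuous_iff_continuousAt.2 fun x => (hDF x).continuousAt
  obtain ⟨C, hC⟩ := hDF_bdd
  have hC0 : 0 ≤ C := (norm_nonneg _).trans (hC 0)
  have hFy : ∀ x, ContinuousOn (fun s => F (y x s)) (Set.Icc 0 T) :=
    fun x => hF.comp_continuousOn (hy_cont x)
  have hSc : ∀ h, ContinuousOn (fun t => S t h) (Set.Icc 0 T) := by
    intro h
    refine (((hy_cont h).sub (ker_continuousOn hk hT.le (hFy h))).sub hg).congr ?_
    intro t ht
    simp only [Pi.sub_apply]
    rw [hy_sol h t ht]; abel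
  obtain ⟨D, hD0, hD⟩ := ker_gronwall (E := H) hC0 hT.le
  -- Lipschitz dependence
  have hlip : ∀ x z, ∀ t ∈ Set.Icc 0 T, ‖y z t - y x t‖ ≤ D * ‖z - x‖ := by
    intro x z t ht
    have := hD K hk (fun t => y z t - y x t) (fun t => S t (z - x))
      (fun s => F (y z s) - F (y x s)) ‖z - x‖ 0 (norm_nonneg _) le_rfl
      ((hy_cont z).sub (hy_cont x)) (fun t ht => by
        simp only [map_sub]
        rw [intervalIntegral.integral_sub (ker_integrable hk ht (hFy z))
          (ker_integrable hk ht (hFy x)), hy_sol z t ht, hy_sol x t ht]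
        abel) (fun t ht => hSb t ht _) (fun t ht => by
        rw [add_zero]
        exact convex_univ.norm_image_sub_le_of_norm_hasFDerivWithin_le
          (fun w _ => (hDF w).hasFDerivWithinAt) (fun w _ => hC w) (Set.mem_univ _)
          (Set.mem_univ _)) t ht
    simpa using this
  intro t ht x
  have hM : ContinuousOn (fun s => DF (y x s)) (Set.Icc 0 T) :=
    hDF_cont.comp_continuousOn (hy_cont x)
  obtain ⟨R, hR⟩ := ker_linear hk hT.le hSc hSb hM
  have hMR : ∀ h, ContinuousOn (fun s => DF (y x s) (R s h)) (Set.Icc 0 T) :=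
    fun h => hM.clm_apply (hR h).1
  refine ⟨R t, ?_, fun h => ⟨fun τ => R τ h, (hR h).1, (hR h).2, ?_, rfl⟩⟩
  · -- differentiability
    rw [hasFDerivAt_iff_isLittleO, Asymptotics.isLittleO_iff]
    intro c hc
    set ε := c / (D * D + 1) with hε
    have hε0 : 0 < ε := by positivity
    have hcomp : IsCompact (y x '' Set.Icc 0 T) := isCompact_Icc.image_of_continuousOn (hy_cont x)
    have hunif := hcomp.uniformContinuousAt_of_continuousAt DF
      (fun a _ => hDF_cont.continuousAt) (Metric.dist_mem_uniformity hε0)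
    obtain ⟨δ, hδ, hδ'⟩ := Metric.mem_uniformity_dist.1 hunif
    have hr : ∀ s ∈ Set.Icc 0 T, ∀ w, ‖w - y x s‖ < δ →
        ‖F w - F (y x s) - DF (y x s) (w - y x s)‖ ≤ ε * ‖w - y x s‖ := by
      intro s hs w hw
      refine (convex_ball (y x s) δ).norm_image_sub_le_of_norm_hasFDerivWithin_le'
        (fun w _ => (hDF w).hasFDerivWithinAt) (fun v hv => ?_) (Metric.mem_ball_self hδ)
        (by rwa [mem_ball_iff_norm])
      have := hδ' (a := y x s) (b := v) (by rw [dist_comm]; exact hv) ⟨s, hs, rfl⟩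
      rw [← dist_eq_norm, dist_comm]
      exact le_of_lt this
    have hnb : ∀ᶠ z in nhds x, ‖z - x‖ < δ / (D + 1) := by
      filter_upwards [Metric.ball_mem_nhds x (show 0 < δ / (D + 1) by positivity)] with z hz
      rwa [← mem_ball_iff_norm]
    filter_upwards [hnb] with z hz
    have hsmall : ∀ s ∈ Set.Icc 0 T, ‖y z s - y x s‖ < δ := by
      intro s hs
      rw [lt_div_iff₀ (by positivity)] at hz
      have := hlip x z s hs
      nlinarith [norm_nonneg (z - x)]
    have := hD K hk (fun t => y z t - y x t - R t (z - x)) (fun _ => 0)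
      (fun s => F (y z s) - F (y x s) - DF (y x s) (R s (z - x))) 0 (ε * (D * ‖z - x‖))
      le_rfl (by positivity) (((hy_cont z).sub (hy_cont x)).sub (hR _).1) (fun t ht => by
        simp only [map_sub (K _)]
        rw [intervalIntegral.integral_sub ((ker_integrable hk ht (hFy z)).sub
          (ker_integrable hk ht (hFy x))) (ker_integrable hk ht (hMR _)),
          intervalIntegral.integral_sub (ker_integrable hk ht (hFy z))
          (ker_integrable hk ht (hFy x)), hy_sol z t ht, hy_sol x t ht, (hR _).2 t ht, map_sub]
        abel) (fun t ht => by simp) (fun s hs => by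
        have e : F (y z s) - F (y x s) - DF (y x s) (R s (z - x)) =
          DF (y x s) (y z s - y x s - R s (z - x)) +
          (F (y z s) - F (y x s) - DF (y x s) (y z s - y x s)) := by
          rw [map_sub (DF (y x s)) (y z s - y x s)]; abel
        rw [e]
        refine (norm_add_le _ _).trans (add_le_add ?_ ?_)
        · exact (ContinuousLinearMap.le_opNorm _ _).trans (by gcongr; exact hC _)
        · refine (hr s hs _ (hsmall s hs)).trans ?_
          gcongr
          exact hlip x z s hs) t ht
    refine this.trans ?_
    rw [zero_add]
    have h1 : D * (ε * (D * ‖z - x‖)) = (D * D) / (D * D + 1) * (c * ‖z - x‖) := by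
      rw [hε]; ring
    rw [h1]
    have h2 : (D * D) / (D * D + 1) ≤ 1 := by
      rw [div_le_one (by positivity)]; linarith
    exact mul_le_of_le_one_left (by positivity) h2
  · intro η' hη' hsol τ hτ
    have := hD K hk (fun t => η' t - R t h) (fun _ => 0)
      (fun s => DF (y x s) (η' s) - DF (y x s) (R s h)) 0 0
      le_rfl le_rfl (hη'.sub (hR _).1) (fun t ht => by
        simp only [map_sub (K _)]
        rw [intervalIntegral.integral_sub (ker_integrable hk ht (hM.clm_apply hη'))
          (ker_integrable hk ht (hMR _)), (hR _).2 t ht, hsol t ht]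
        abel) (fun t ht => by simp) (fun s hs => by
        rw [add_zero, ← map_sub]
        exact (ContinuousLinearMap.le_opNorm _ _).trans (by gcongr; exact hC _)) τ hτ
    rw [add_zero, mul_zero] at this
    exact sub_eq_zero.1 (norm_le_zero_iff.1 this)
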